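/- Let Φ be a Young function of class Δ₂ ∩ ∇₂ and let f: ℝ³ × ℝ^{3×3} → ℝ be a Carathéodory function satisfying (H1) and (H2). Then Tf⁰hom(V, ·) is rank-one convex along tangential rank-one directions: for every linear subspace V ⊆ ℝ³, every ξ_α ∈ V², every a ∈ V and b ∈ ℝ², the function λ ↦ Tf⁰hom(V, ξ_α + λ·a bᵀ) is convex on ℝ (here a bᵀ is the rank-one 3×2 matrix with columns b₁a and b₂a). -/

import Mathlib

/-!
The proof is the classical laminate construction, carried out inside the cell problem. For
`x < y` and `θ ∈ (0, 1)` one has to show that the value of `Tf⁰hom(V, ·)` at the mean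
`ξ = ξ_α + ((1 - θ) x + θ y) a bᵀ` is at most the corresponding average of its values at the two
phases, which differ from `ξ` by `-θ (y - x) a bᵀ` and `(1 - θ) (y - x) a bᵀ`.

On a large square of side `T` take as background the map `w = s a`, with `s` a sawtooth of scale `p`
in direction `b` whose two slopes realise the two phases, cut off near the lateral boundary by the
distance to it (`laminate`). Since `a ∈ V`, the map `w` takes values in `V`, and its Lipschitz
constant does not depend on `p` and `T`, so that the energy density of `w` is bounded by a constant
`C`. Choose for each phase a nearly optimal competitor `φ i` on a square of side `t i`, and tile the
large square with squares whose sides `2 (m i) ≥ t i` are even integers. Wherever a tile lies inside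
one layer of the laminate, where `w` is affine, glue in a translate of `φ i`; by planar
periodicity, translates by integer vectors do not change the energy. The uncovered part costs at
most `C` per unit of volume (`cellInf_le_of_glue`).

A tile for the phase `i` fits into its layer when the phase of the sawtooth at its centre lies in
an interval of length `ℓ i - O(m i / p)`, where `ℓ 0 = 1 - θ` and `ℓ 1 = θ`. Instead of counting
the tiles that fit, average over translations of the sawtooth: some translation does at least as
well as the average (`exists_phase`). This gives the finite-scale estimate `cellInf_laminate_le`.
Letting `T → ∞` and then `p → ∞` yields `Tf0hom_le_of_competitors`. Finally the `t i` are taken so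
large that rounding them up to even integers costs only `ε` (`Tf0hom_laminate_le`).

The growth condition enters only through `f ≥ 0` and the boundedness of `f` on bounded sets of
matrices (`LocBdd`). The same facts show that the scaled infima are bounded, so that the real-valued
`sInf` and `liminf` are not junk values.
-/

open MeasureTheory Filter

noncomputable section

abbrev V3 : Type := Fin 3 → ℝ
abbrev V2 : Type := Fin 2 → ℝ
abbrev M33 : Type := Matrix (Fin 3) (Fin 3) ℝ
abbrev M32 : Type := Matrix (Fin 3) (Fin 2) ℝ

/-- `Φ : [0,∞) → [0,∞)` is a Young function: continuous, convex, positive for `t > 0`,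
`Φ(t)/t → 0` as `t → 0⁺` and `Φ(t)/t → ∞` as `t → ∞`. -/
def IsYoung (Φ : ℝ → ℝ) : Prop :=
  ContinuousOn Φ (Set.Ici 0) ∧ ConvexOn ℝ (Set.Ici 0) Φ ∧
  (∀ t : ℝ, 0 < t → 0 < Φ t) ∧
  Tendsto (fun t => Φ t / t) (nhdsWithin 0 (Set.Ioi 0)) (nhds 0) ∧
  Tendsto (fun t => Φ t / t) atTop atTop

/-- The Δ₂ condition (at infinity). -/
def Delta2 (Φ : ℝ → ℝ) : Prop :=
  ∃ α : ℝ, 0 < α ∧ ∃ t₀ : ℝ, 0 ≤ t₀ ∧ ∀ t, t₀ ≤ t → Φ (2 * t) ≤ α * Φ t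

/-- The ∇₂ condition. -/
def Nabla2 (Φ : ℝ → ℝ) : Prop :=
  ∃ β : ℝ, 0 < β ∧ ∃ t₀ : ℝ, 1 < t₀ ∧ ∀ t, t₀ ≤ t → Φ t ≤ (1 / (2 * β)) * Φ (β * t)

/-- Frobenius norm of a real matrix. -/
def frobNorm {m n : ℕ} (ξ : Matrix (Fin m) (Fin n) ℝ) : ℝ :=
  Real.sqrt (∑ i, ∑ j, (ξ i j) ^ 2)

/-- The open cylinder `(tQ')₁ = (−t/2,t/2)² × (−1/2,1/2)`. -/
def openCyl (t : ℝ) : Set V3 := {x | |x 0| < t / 2 ∧ |x 1| < t / 2 ∧ |x 2| < 1 / 2}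

/-- The lateral boundary `∂((−t/2,t/2)²) × (−1/2,1/2)`. -/
def latBdry (t : ℝ) : Set V3 := {x | max |x 0| |x 1| = t / 2 ∧ |x 2| < 1 / 2}

/-- The (a.e. defined, via Rademacher) matrix of partial derivatives of a Lipschitz map:
row `i`, column `j` is `∂φᵢ/∂xⱼ`. -/
def gradm (φ : V3 → V3) (x : V3) : M33 :=
  Matrix.of fun i j => fderiv ℝ φ x (Pi.single j 1) i

/-- Planar-gradient matrix (3×2) of a map on `ℝ²`. -/
def gradm2 (ψ : V2 → V3) (y : V2) : M32 :=
  Matrix.of fun i j => fderiv ℝ ψ y (Pi.single j 1) i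

/-- The 3×3 matrix `(ξ_α + ∇_αφ | ∇₃φ)`: first two columns of `A` shifted by `ξ_α`,
third column untouched. -/
def withCol (ξα : M32) (A : M33) : M33 :=
  Matrix.of fun i j => (if h : (j : ℕ) < 2 then ξα i ⟨(j : ℕ), h⟩ else 0) + A i j

/-- The admissible class `𝒜_t`: Lipschitz maps vanishing on the lateral boundary. -/
def AdmSet (t : ℝ) : Set (V3 → V3) :=
  {φ | (∃ K : NNReal, LipschitzWith K φ) ∧ ∀ x ∈ latBdry t, φ x = 0}

/-- The constrained admissible class `𝒜_t(V)`: members of `𝒜_t` with values in `V`. -/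
def AdmVSet (t : ℝ) (V : Submodule ℝ V3) : Set (V3 → V3) :=
  {φ | φ ∈ AdmSet t ∧ ∀ x, φ x ∈ V}

/-- The cell energy `∫_{(tQ')₁} f(x, (ξ_α + ∇_αφ | ∇₃φ)) dx`. -/
def cellE (f : V3 → M33 → ℝ) (ξα : M32) (t : ℝ) (φ : V3 → V3) : ℝ :=
  ∫ x in openCyl t, f x (withCol ξα (gradm φ x))

/-- The cell infimum over a class `S` of test maps. -/
def cellInf (f : V3 → M33 → ℝ) (ξα : M32) (t : ℝ) (S : Set (V3 → V3)) : ℝ :=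
  sInf ((fun φ => cellE f ξα t φ) '' S)

/-- The constrained tangentially homogenized density `Tf⁰hom(V, ξ_α)`. -/
def Tf0hom (f : V3 → M33 → ℝ) (V : Submodule ℝ V3) (ξα : M32) : ℝ :=
  liminf (fun t : ℝ => (t ^ 2)⁻¹ * cellInf f ξα t (AdmVSet t V)) atTop

/-- The unconstrained homogenized density (liminf of the scaled cell infima over `𝒜_t`). -/
def homDens (f : V3 → M33 → ℝ) (ξα : M32) : ℝ :=
  liminf (fun t : ℝ => (t ^ 2)⁻¹ * cellInf f ξα t (AdmSet t)) atTop

/-- `P` is the orthogonal projection of `ℝ³` onto the subspace `V` (with respect to the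
Euclidean inner product). -/
def IsOrthProjOnto (V : Submodule ℝ V3) (P : V3 → V3) : Prop :=
  IsLinearMap ℝ P ∧ (∀ x, P x ∈ V) ∧ (∀ x ∈ V, P x = x) ∧
    (∀ x : V3, ∀ v ∈ V, (∑ i, (x i - P x i) * v i) = 0)

/-- Column-wise action `𝐏ξ = (Pξ₁ | Pξ₂ | Pξ₃)` of a projection on 3×3 matrices. -/
def Pmat (P : V3 → V3) (ξ : M33) : M33 :=
  Matrix.of fun i j => P (fun k => ξ k j) i

/-- The penalized integrand `f̄(x,ξ) = f(x,𝐏ξ) + Φ(|ξ − 𝐏ξ|)`. -/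
def fbar (Φ : ℝ → ℝ) (P : V3 → V3) (f : V3 → M33 → ℝ) : V3 → M33 → ℝ :=
  fun x ξ => f x (Pmat P ξ) + Φ (frobNorm (ξ - Pmat P ξ))

/-- Carathéodory function: measurable in `x`, continuous in `ξ`. -/
def Caratheodory (f : V3 → M33 → ℝ) : Prop :=
  (∀ ξ, Measurable fun x => f x ξ) ∧ (∀ x, Continuous fun ξ => f x ξ)

/-- (H1): 1-periodicity in the planar variable. -/
def H1per (f : V3 → M33 → ℝ) : Prop :=
  ∀ (x : V3) (ξ : M33) (i : Fin 3), (i : ℕ) < 2 → f (x + Pi.single i 1) ξ = f x ξ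

/-- (H2): `Φ`-coercivity and `Φ`-growth, for a.e. `x` and all `ξ`. -/
def H2growth (Φ : ℝ → ℝ) (α β : ℝ) (f : V3 → M33 → ℝ) : Prop :=
  ∀ᵐ x : V3 ∂volume, ∀ ξ : M33, α * Φ (frobNorm ξ) ≤ f x ξ ∧ f x ξ ≤ β * (1 + Φ (frobNorm ξ))

/-- `ξ_α ∈ V²`: both columns of the 3×2 matrix belong to `V`. -/
def colsIn (V : Submodule ℝ V3) (ξα : M32) : Prop :=
  ∀ j : Fin 2, (fun i => ξα i j) ∈ V

/-- The open unit square `Q' = (−1/2,1/2)²`. -/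
def sq2 : Set V2 := {y | |y 0| < 1 / 2 ∧ |y 1| < 1 / 2}

/-! ### Measurability, growth and cell energies -/

lemma measurable_caratheodory_comp {f : V3 → M33 → ℝ} (hf : Caratheodory f) {G : V3 → M33}
    (hG : ∀ i j, Measurable fun x => G x i j) : Measurable fun x => f x (G x) := by
  have h1 : Measurable (Function.uncurry fun (ξ : Fin 3 → Fin 3 → ℝ) (x : V3) =>
      f x (Matrix.of ξ)) := by
    refine measurable_uncurry_of_continuous_of_measurable (fun x => ?_) (fun ξ => hf.1 _)
    exact (hf.2 x).comp continuous_id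
  have h2 : Measurable fun x : V3 => ((fun i j => G x i j : Fin 3 → Fin 3 → ℝ), x) :=
    (measurable_pi_lambda _ fun i => measurable_pi_lambda _ fun j => hG i j).prodMk measurable_id
  exact h1.comp h2

lemma measurable_energy {f : V3 → M33 → ℝ} (hf : Caratheodory f) (ξ : M32) (u : V3 → V3) :
    Measurable fun x => f x (withCol ξ (gradm u x)) := by
  refine measurable_caratheodory_comp hf fun i j => ?_
  have h : Measurable fun x => gradm u x i j :=
    (measurable_pi_apply i).comp (measurable_fderiv_apply_const ℝ u (Pi.single j 1))
  exact measurable_const.add h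

lemma abs_gradm_le {u : V3 → V3} {K : NNReal} (hu : LipschitzWith K u) (x : V3) (i j : Fin 3) :
    |gradm u x i j| ≤ K := by
  have h1 : ‖fderiv ℝ u x‖ ≤ K := norm_fderiv_le_of_lipschitz ℝ hu
  have h2 : ‖fderiv ℝ u x (Pi.single j 1)‖ ≤ K := by
    refine ((fderiv ℝ u x).le_opNorm _).trans ?_
    simpa [Pi.norm_single] using h1
  exact (norm_le_pi_norm (fderiv ℝ u x (Pi.single j 1)) i).trans h2

lemma abs_withCol_le {ξ : M32} {R K : ℝ} (hξ : ∀ i j, |ξ i j| ≤ R) (hR : 0 ≤ R) {A : M33}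
    (hA : ∀ i j, |A i j| ≤ K) (i j : Fin 3) : |withCol ξ A i j| ≤ R + K := by
  refine (abs_add_le _ _).trans (add_le_add ?_ (hA i j))
  split_ifs with h
  · exact hξ _ _
  · simpa using hR

lemma withCol_add (ξ : M32) (A B : M33) : withCol ξ (A + B) = withCol ξ A + B := by
  ext i j
  simp [withCol, add_assoc]

/-- The two consequences of the growth condition that the argument uses: `f ≥ 0`, and `f` is
bounded, uniformly in `x`, on bounded sets of matrices. -/
def LocBdd (f : V3 → M33 → ℝ) : Prop :=
  (∀ᵐ x : V3, ∀ ξ, 0 ≤ f x ξ) ∧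
  ∀ R : ℝ, ∃ C : ℝ, 0 ≤ C ∧ ∀ᵐ x : V3, ∀ ξ : M33, (∀ i j, |ξ i j| ≤ R) → f x ξ ≤ C

lemma locBdd_of_growth {Φ : ℝ → ℝ} (hΦ : IsYoung Φ) {f : V3 → M33 → ℝ} {α β : ℝ}
    (hα : 0 < α) (hαβ : α ≤ β) (hf2 : H2growth Φ α β f) : LocBdd f := by
  have hpos : ∀ t, 0 ≤ t → 0 ≤ Φ t := by
    intro t ht
    rcases ht.eq_or_lt with rfl | ht
    · have h1 : Tendsto Φ (nhdsWithin 0 (Set.Ioi 0)) (nhds (Φ 0)) :=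
        (hΦ.1 0 (by simp)).mono_left (nhdsWithin_mono _ Set.Ioi_subset_Ici_self)
      exact ge_of_tendsto h1 (eventually_mem_nhdsWithin.mono fun t ht => (hΦ.2.2.1 t ht).le)
    · exact (hΦ.2.2.1 t ht).le
  refine ⟨?_, fun R => ?_⟩
  · filter_upwards [hf2] with x hx ξ
    exact (mul_nonneg hα.le (hpos _ (Real.sqrt_nonneg _))).trans (hx ξ).1
  · obtain ⟨C, hC⟩ := (isCompact_Icc (a := (0 : ℝ)) (b := Real.sqrt (9 * R ^ 2))).exists_bound_of_continuousOn
      (hΦ.1.mono fun t ht => ht.1)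
    refine ⟨max 0 (β * (1 + C)), le_max_left _ _, ?_⟩
    filter_upwards [hf2] with x hx ξ hξ
    refine le_max_of_le_right ((hx ξ).2.trans ?_)
    have h1 : frobNorm ξ ≤ Real.sqrt (9 * R ^ 2) := by
      refine Real.sqrt_le_sqrt ?_
      calc ∑ i, ∑ j, (ξ i j) ^ 2 ≤ ∑ _i : Fin 3, ∑ _j : Fin 3, R ^ 2 :=
            Finset.sum_le_sum fun i _ => Finset.sum_le_sum fun j _ =>
              sq_le_sq' (abs_le.1 (hξ i j)).1 (abs_le.1 (hξ i j)).2
        _ = 9 * R ^ 2 := by simp; ring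
    have h2 := hC (frobNorm ξ) ⟨Real.sqrt_nonneg _, h1⟩
    have h3 : Φ (frobNorm ξ) ≤ C := (le_abs_self _).trans h2
    have : 0 ≤ β := hα.le.trans hαβ
    gcongr

lemma openCyl_eq_pi (t : ℝ) : openCyl t = Set.univ.pi fun i : Fin 3 =>
    Set.Ioo ((![-(t / 2), -(t / 2), -(1 / 2)] : V3) i) ((![t / 2, t / 2, 1 / 2] : V3) i) := by
  ext x
  simp [openCyl, Set.mem_pi, Fin.forall_fin_succ, abs_lt]

lemma measurableSet_openCyl (t : ℝ) : MeasurableSet (openCyl t) := by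
  rw [openCyl_eq_pi]; exact MeasurableSet.univ_pi fun _ => measurableSet_Ioo

lemma isOpen_openCyl (t : ℝ) : IsOpen (openCyl t) := by
  rw [openCyl_eq_pi]; exact isOpen_set_pi Set.finite_univ fun _ _ => isOpen_Ioo

lemma volume_openCyl {t : ℝ} (ht : 0 ≤ t) : volume (openCyl t) = ENNReal.ofReal (t ^ 2) := by
  rw [openCyl_eq_pi, Real.volume_pi_Ioo]
  simp only [Fin.prod_univ_three]
  simp [← ENNReal.ofReal_mul ht]
  norm_num
  rw [pow_two]

lemma volume_real_openCyl {t : ℝ} (ht : 0 ≤ t) : volume.real (openCyl t) = t ^ 2 := by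
  rw [measureReal_def, volume_openCyl ht, ENNReal.toReal_ofReal (by positivity)]

lemma cellE_nonneg {f : V3 → M33 → ℝ} (hb : LocBdd f) (ξ : M32) (t : ℝ) (φ : V3 → V3) :
    0 ≤ cellE f ξ t φ :=
  setIntegral_nonneg_of_ae (hb.1.mono fun _ hx => hx _)

lemma cellInf_nonneg {f : V3 → M33 → ℝ} (hb : LocBdd f) (ξ : M32) (t : ℝ) (S : Set (V3 → V3)) :
    0 ≤ cellInf f ξ t S := by
  refine Real.sInf_nonneg ?_
  rintro _ ⟨φ, -, rfl⟩
  exact cellE_nonneg hb ξ t φ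

lemma cellInf_le {f : V3 → M33 → ℝ} (hb : LocBdd f) (ξ : M32) (t : ℝ) {S : Set (V3 → V3)}
    {φ : V3 → V3} (hφ : φ ∈ S) : cellInf f ξ t S ≤ cellE f ξ t φ := by
  refine csInf_le ⟨0, ?_⟩ ⟨φ, hφ, rfl⟩
  rintro _ ⟨φ, -, rfl⟩
  exact cellE_nonneg hb ξ t φ

lemma zero_mem_AdmVSet (t : ℝ) (V : Submodule ℝ V3) : (0 : V3 → V3) ∈ AdmVSet t V :=
  ⟨⟨⟨0, LipschitzWith.const 0⟩, fun _ _ => rfl⟩, fun _ => V.zero_mem⟩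

lemma integrableOn_energy {f : V3 → M33 → ℝ} (hf : Caratheodory f) (hb : LocBdd f) (ξ : M32)
    {T : ℝ} (hT : 0 ≤ T) {u : V3 → V3} {K : NNReal} (hu : LipschitzWith K u) :
    IntegrableOn (fun x => f x (withCol ξ (gradm u x))) (openCyl T) := by
  have hξ : ∀ i j, |ξ i j| ≤ ∑ i, ∑ j, |ξ i j| := fun i j =>
    (Finset.single_le_sum (f := fun j => |ξ i j|) (fun _ _ => abs_nonneg _) (Finset.mem_univ j)).trans
      (Finset.single_le_sum (f := fun i => ∑ j, |ξ i j|)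
        (fun _ _ => Finset.sum_nonneg fun _ _ => abs_nonneg _) (Finset.mem_univ i))
  obtain ⟨C, -, hC⟩ := hb.2 ((∑ i, ∑ j, |ξ i j|) + K)
  refine Measure.integrableOn_of_bounded (M := C) (by simp [volume_openCyl hT])
    (measurable_energy hf ξ u).aestronglyMeasurable (ae_restrict_of_ae ?_)
  filter_upwards [hb.1, hC] with x h0 hx
  rw [Real.norm_of_nonneg (h0 _)]
  exact hx _ (abs_withCol_le hξ ((abs_nonneg _).trans (hξ 0 0)) (abs_gradm_le hu x))


/-! ### Gluing competitors on integer translates -/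

/-- The lateral extension by zero of a competitor on `(tQ')₁`: precomposition with the projection
of the planar variables onto the closed square of side `t`. On the slab `|x₃| < 1/2` it agrees with
the competitor inside the cylinder and vanishes outside. -/
def latExt (t : ℝ) (φ : V3 → V3) (x : V3) : V3 :=
  φ fun i => if i = 2 then x i else max (-(t / 2)) (min (t / 2) (x i))

lemma lipschitzWith_latExt {t : ℝ} {φ : V3 → V3} {K : NNReal} (hφ : LipschitzWith K φ) :
    LipschitzWith K (latExt t φ) := by
  have h : LipschitzWith 1 fun (x : V3) (i : Fin 3) =>
      if i = 2 then x i else max (-(t / 2)) (min (t / 2) (x i)) := by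
    suffices h : ∀ i : Fin 3, LipschitzWith 1 fun x : V3 =>
        if i = 2 then x i else max (-(t / 2)) (min (t / 2) (x i)) from
      fun x y => edist_pi_le_iff.2 fun i => h i x y
    intro i
    by_cases hi : i = 2
    · simpa [hi] using LipschitzWith.eval (α := fun _ : Fin 3 => ℝ) 2
    · simpa [hi] using
        ((LipschitzWith.eval (α := fun _ : Fin 3 => ℝ) i).const_min (t / 2)).const_max (-(t / 2))
  have h' := hφ.comp h
  rw [mul_one] at h'
  exact h'

lemma latExt_eq {t : ℝ} {φ : V3 → V3} {x : V3} (hx : x ∈ openCyl t) : latExt t φ x = φ x := by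
  obtain ⟨h0, h1, -⟩ := hx
  rw [abs_lt] at h0 h1
  unfold latExt
  congr 1
  ext i
  fin_cases i
  · simp [min_eq_right h0.2.le, max_eq_right h0.1.le]
  · simp [min_eq_right h1.2.le, max_eq_right h1.1.le]
  · simp

lemma abs_clamp_le {s y : ℝ} (hs : 0 ≤ s) : |max (-s) (min s y)| ≤ s :=
  abs_le.2 ⟨le_max_left _ _, max_le (by linarith) (min_le_left _ _)⟩

lemma abs_clamp_eq {s y : ℝ} (hs : 0 ≤ s) (hy : s ≤ |y|) : |max (-s) (min s y)| = s := by
  rcases le_abs.1 hy with h | h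
  · rw [min_eq_left h, max_eq_right (by linarith), abs_of_nonneg hs]
  · rw [min_eq_right (by linarith), max_eq_left (by linarith), abs_neg, abs_of_nonneg hs]

lemma latExt_eq_zero {t : ℝ} (ht : 0 ≤ t) {φ : V3 → V3} (hφ : φ ∈ AdmSet t) {x : V3}
    (hx : |x 2| < 1 / 2) (hx' : x ∉ openCyl t) : latExt t φ x = 0 := by
  have h2 : t / 2 ≤ |x 0| ∨ t / 2 ≤ |x 1| := by
    by_contra! h
    exact hx' ⟨h.1, h.2, hx⟩
  refine hφ.2 _ ⟨?_, by simpa using hx⟩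
  have ht2 : 0 ≤ t / 2 := by positivity
  rcases h2 with h | h
  · simpa [abs_clamp_eq ht2 h] using abs_clamp_le ht2
  · simpa [abs_clamp_eq ht2 h] using abs_clamp_le ht2

/-- Planar periodicity along all integer vectors. -/
lemma periodic_int {f : V3 → M33 → ℝ} (hf1 : H1per f) (k l : ℤ) (x : V3) (ξ : M33) :
    f (x + ![(k : ℝ), (l : ℝ), 0]) ξ = f x ξ := by
  have key : ∀ (i : Fin 3), (i : ℕ) < 2 → ∀ (k : ℤ) (x : V3),
      f (x + (k : ℝ) • Pi.single i 1) ξ = f x ξ := by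
    intro i hi k
    induction k using Int.induction_on with
    | zero => intro x; simp
    | succ k ih =>
      intro x
      rw [← ih x, ← hf1 (x + ((k : ℤ) : ℝ) • Pi.single i 1) ξ i hi]
      push_cast
      rw [add_smul, one_smul, add_assoc]
    | pred k ih =>
      intro x
      rw [← ih x, ← hf1 (x + ((-(k : ℤ) - 1 : ℤ) : ℝ) • Pi.single i 1) ξ i hi]
      push_cast
      rw [sub_smul, one_smul, add_assoc, sub_add_cancel]
  have h : x + ![(k : ℝ), (l : ℝ), 0] =
      (x + (k : ℝ) • Pi.single 0 1) + (l : ℝ) • Pi.single (1 : Fin 3) (1 : ℝ) := by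
    ext i
    fin_cases i <;> simp
  rw [h, key 1 (by norm_num), key 0 (by norm_num)]

lemma isOpen_slab : IsOpen {x : V3 | |x 2| < 1 / 2} :=
  isOpen_lt (by fun_prop) continuous_const

lemma ae_abs_sub_ne (i : Fin 3) (c s : ℝ) : ∀ᵐ x : V3, |x i - c| ≠ s := by
  have h : ∀ d : ℝ, ∀ᵐ x : V3, x i ≠ d := fun d => by
    have := Measure.pi_hyperplane (μ := fun _ : Fin 3 => (volume : Measure ℝ)) i d
    rw [ae_iff]
    simpa [volume_pi] using this
  filter_upwards [h (c + s), h (c - s)] with x h1 h2 h3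
  rcases eq_or_eq_neg_of_abs_eq h3 with h | h
  · exact h1 (by linarith)
  · exact h2 (by linarith)

/-- Gluing of competitors: a background competitor `w` on the large cylinder, with translates of
competitors `φ j` on disjoint cylinders glued in wherever `w` is affine on the cylinder. The part
of the large cylinder that is not covered is paid for with the bound `C` on the energy density of
the background. -/
lemma cellInf_le_of_glue {f : V3 → M33 → ℝ} (hf : Caratheodory f) (hf1 : H1per f) (hb : LocBdd f)
    {V : Submodule ℝ V3} {ξ : M32} {T C : ℝ} (hT : 0 ≤ T) {w : V3 → V3} (hw : w ∈ AdmVSet T V)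
    (hC : ∀ᵐ x, f x (withCol ξ (gradm w x)) ≤ C)
    {ι : Type*} (J : Finset ι) (k l : ι → ℤ) (z : ι → V3) (hz : ∀ j, z j = ![(k j : ℝ), (l j : ℝ), 0])
    (t : ι → ℝ) (ht : ∀ j, 0 < t j)
    (φ : ι → V3 → V3) (hφ : ∀ j, φ j ∈ AdmVSet (t j) V) (ξ' : ι → M32)
    (hsub : ∀ j ∈ J, ∀ x, x - z j ∈ openCyl (t j) → x ∈ openCyl T)
    (hdisj : ∀ j ∈ J, ∀ j' ∈ J, j ≠ j' → ∀ x, x - z j ∈ openCyl (t j) → x - z j' ∉ openCyl (t j'))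
    (hgrad : ∀ j ∈ J, ∀ x, x - z j ∈ openCyl (t j) →
      DifferentiableAt ℝ w x ∧ withCol ξ (gradm w x) = withCol (ξ' j) 0) :
    cellInf f ξ T (AdmVSet T V) ≤
      C * T ^ 2 + ∑ j ∈ J, (cellE f (ξ' j) (t j) (φ j) - C * t j ^ 2) := by
  have hz2 : ∀ j, z j 2 = 0 := fun j => by rw [hz]; simp
  set g : ι → V3 → V3 := fun j x => latExt (t j) (φ j) (x - z j) with hg
  set u : V3 → V3 := fun x => w x + ∑ j ∈ J, g j x with hu
  set cell : ι → Set V3 := fun j => (fun x => x - z j) ⁻¹' openCyl (t j) with hcell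
  have hcellopen : ∀ j, IsOpen (cell j) := fun j =>
    (isOpen_openCyl _).preimage (continuous_id.sub continuous_const)
  have hcellmeas : ∀ j, MeasurableSet (cell j) := fun j => (hcellopen j).measurableSet
  choose K hK using fun j => (hφ j).1.1
  have hgLip : ∀ j, LipschitzWith (K j) (g j) := fun j => by
    simpa [hg, Function.comp_def] using (lipschitzWith_latExt (t := t j) (hK j)).comp
      (LipschitzWith.id.sub (LipschitzWith.const (z j)))
  have hgzero : ∀ j x, |x 2| < 1 / 2 → x ∉ cell j → g j x = 0 := fun j x hx hx' =>
    latExt_eq_zero (ht j).le (hφ j).1 (by simpa [hz2] using hx) hx'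
  have hgeq : ∀ j x, x ∈ cell j → g j x = φ j (x - z j) := fun j x hx => latExt_eq hx
  obtain ⟨Kw, hKw⟩ := hw.1.1
  have hsumLip : ∀ J' : Finset ι, LipschitzWith (∑ j ∈ J', K j) fun x => ∑ j ∈ J', g j x := by
    classical
    intro J'
    induction J' using Finset.induction_on with
    | empty => exact LipschitzWith.const (0 : V3)
    | insert j J' hj ih => simpa [Finset.sum_insert hj] using (hgLip j).add ih
  have huLip := hKw.add (hsumLip J)
  have huAdm : u ∈ AdmVSet T V := by
    refine ⟨⟨⟨_, huLip⟩, fun x hx => ?_⟩, fun x => ?_⟩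
    · have hxT : x ∉ openCyl T := fun h => by
        have := hx.1
        exact absurd this (max_lt h.1 h.2.1).ne
      simp only [hu]
      rw [hw.1.2 x hx, zero_add]
      exact Finset.sum_eq_zero fun j hj => hgzero j x hx.2 fun h => hxT (hsub j hj x h)
    · exact V.add_mem (hw.2 x) (V.sum_mem fun j _ => (hφ j).2 _)
  refine (cellInf_le hb ξ T huAdm).trans ?_
  set F : V3 → ℝ := fun x => f x (withCol ξ (gradm u x)) with hF
  have hFint : IntegrableOn F (openCyl T) := integrableOn_energy hf hb ξ hT huLip
  set U : Set V3 := ⋃ j ∈ J, cell j with hU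
  have hUsub : U ⊆ openCyl T := Set.iUnion₂_subset fun j hj x hx => hsub j hj x hx
  have hUmeas : MeasurableSet U := Finset.measurableSet_biUnion _ fun j _ => hcellmeas j
  have hpd : Set.PairwiseDisjoint (↑J) cell := fun j hj j' hj' hne =>
    Set.disjoint_left.2 fun x hx hx' => hdisj j hj j' hj' hne x hx hx'
  have hvol : ∀ j, volume (cell j) = ENNReal.ofReal (t j ^ 2) := fun j => by
    rw [hcell, ← volume_openCyl (ht j).le]
    exact (measurePreserving_sub_right volume (z j)).measure_preimage
      (measurableSet_openCyl _).nullMeasurableSet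
  have hvolr : ∀ j, volume.real (cell j) = t j ^ 2 := fun j => by
    rw [measureReal_def, hvol, ENNReal.toReal_ofReal (by positivity)]
  have hTfin : volume (openCyl T) ≠ ⊤ := by simp [volume_openCyl hT]
  have hrest : volume.real (openCyl T \ U) = T ^ 2 - ∑ j ∈ J, t j ^ 2 := by
    rw [measureReal_sdiff hUsub hUmeas hTfin, volume_real_openCyl hT,
      measureReal_biUnion_finset hpd (fun j _ => hcellmeas j) (fun j _ => by simp [hvol])]
    simp [hvolr]
  -- on the uncovered part the glued map coincides with the background near almost every point
  have hI1 : ∫ x in openCyl T \ U, F x ≤ C * (T ^ 2 - ∑ j ∈ J, t j ^ 2) := by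
    have h1 : ∀ᵐ x : V3, ∀ j ∈ J, |x 0 - z j 0| ≠ t j / 2 ∧ |x 1 - z j 1| ≠ t j / 2 := by
      rw [eventually_all_finset]
      exact fun j _ => (ae_abs_sub_ne _ _ _).and (ae_abs_sub_ne _ _ _)
    have h2 : ∀ᵐ x : V3, x ∈ openCyl T \ U → F x ≤ C := by
      filter_upwards [h1, hC] with x hx1 hx2 hx
      have hev : u =ᶠ[nhds x] w := by
        have : ∀ j ∈ J, ∀ᶠ y in nhds x, g j y = 0 := by
          intro j hj
          have hslab : ∀ᶠ y in nhds x, |y 2| < 1 / 2 := isOpen_slab.mem_nhds hx.1.2.2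
          have hxn : x ∉ cell j := fun h => hx.2 (Set.mem_biUnion hj h)
          have hor : t j / 2 < |x 0 - z j 0| ∨ t j / 2 < |x 1 - z j 1| := by
            by_contra! h
            exact hxn ⟨h.1.lt_of_ne (hx1 j hj).1, h.2.lt_of_ne (hx1 j hj).2,
              by simpa [hz2] using hx.1.2.2⟩
          rcases hor with h | h
          · have : ∀ᶠ y : V3 in nhds x, t j / 2 < |y 0 - z j 0| :=
              (isOpen_lt continuous_const (by fun_prop)).mem_nhds h
            filter_upwards [hslab, this] with y hy1 hy2
            exact hgzero j y hy1 fun hy => absurd hy.1 hy2.not_gt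
          · have : ∀ᶠ y : V3 in nhds x, t j / 2 < |y 1 - z j 1| :=
              (isOpen_lt continuous_const (by fun_prop)).mem_nhds h
            filter_upwards [hslab, this] with y hy1 hy2
            exact hgzero j y hy1 fun hy => absurd hy.2.1 hy2.not_gt
        rw [← eventually_all_finset] at this
        filter_upwards [this] with y hy
        simp only [hu]
        rw [Finset.sum_eq_zero hy, add_zero]
      have : gradm u x = gradm w x := by
        unfold gradm; rw [hev.fderiv_eq]
      simpa only [hF, this] using hx2
    calc ∫ x in openCyl T \ U, F x ≤ ∫ _x in openCyl T \ U, C := by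
          refine setIntegral_mono_on_ae (hFint.mono_set Set.sdiff_subset) ?_
            ((measurableSet_openCyl T).diff hUmeas) h2
          exact integrableOn_const (ne_top_of_le_ne_top hTfin (measure_mono Set.sdiff_subset))
      _ = C * (T ^ 2 - ∑ j ∈ J, t j ^ 2) := by
          rw [setIntegral_const, hrest, smul_eq_mul, mul_comm]
  -- on a cell the energy is a translate of the energy of the competitor glued in
  have hI2 : ∀ j ∈ J, ∫ x in cell j, F x = cellE f (ξ' j) (t j) (φ j) := by
    intro j hj
    have h1 : ∀ᵐ x : V3, x ∈ cell j → F x =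
        (fun y => f y (withCol (ξ' j) (gradm (φ j) y))) (x - z j) := by
      filter_upwards [(hgLip j).ae_differentiableAt] with x hxd hx
      have hgφ : fderiv ℝ (g j) x = fderiv ℝ (φ j) (x - z j) := by
        rw [← fderiv_comp_sub]
        refine Filter.EventuallyEq.fderiv_eq ?_
        filter_upwards [(hcellopen j).mem_nhds hx] with y hy using hgeq j y hy
      have hev : u =ᶠ[nhds x] fun y => w y + g j y := by
        filter_upwards [(hcellopen j).mem_nhds hx] with y hy
        simp only [hu]
        rw [Finset.sum_eq_single_of_mem j hj]
        intro j' hj' hne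
        exact hgzero j' y (by simpa [hz2] using hy.2.2) (hdisj j hj j' hj' hne.symm y hy)
      have hgr : gradm u x = gradm w x + gradm (φ j) (x - z j) := by
        ext i m
        simp only [gradm, Matrix.of_apply, Matrix.add_apply]
        rw [hev.fderiv_eq, fderiv_fun_add (hgrad j hj x hx).1 hxd, hgφ]
        simp
      have hper : ∀ ζ, f x ζ = f (x - z j) ζ := fun ζ => by
        rw [← periodic_int hf1 (k j) (l j) (x - z j) ζ, ← hz, sub_add_cancel]
      simp only [hF]
      rw [hgr, withCol_add, (hgrad j hj x hx).2, ← withCol_add, zero_add, hper]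
    rw [setIntegral_congr_ae (hcellmeas j) h1]
    exact (measurePreserving_sub_right volume (z j)).setIntegral_preimage_emb
      (measurableEmbedding_subRight (z j))
      (fun y => f y (withCol (ξ' j) (gradm (φ j) y))) (openCyl (t j))
  have hsplit : cellE f ξ T u = (∑ j ∈ J, ∫ x in cell j, F x) + ∫ x in openCyl T \ U, F x := by
    rw [← integral_biUnion_finset J (fun j _ => hcellmeas j) hpd
      (fun j hj => hFint.mono_set fun x hx => hsub j hj x hx)]
    have := setIntegral_union (μ := volume) (f := F) (s := U) (t := openCyl T \ U)
      Set.disjoint_sdiff_right ((measurableSet_openCyl T).diff hUmeas) (hFint.mono_set hUsub)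
      (hFint.mono_set Set.sdiff_subset)
    rw [Set.union_sdiff_cancel hUsub] at this
    exact this
  rw [hsplit, Finset.sum_congr rfl hI2, Finset.sum_sub_distrib, ← Finset.mul_sum]
  linarith


/-! ### Sawtooth functions and laminates -/

/-- The 1-periodic sawtooth: slope `1 - θ` where the fractional part lies in `(0, θ)`, slope `-θ`
where it lies in `(θ, 1)`. -/
def saw (θ y : ℝ) : ℝ := min ((1 - θ) * Int.fract y) (θ * (1 - Int.fract y))

/-- Lower end of the phase interval of layer `i` (layer `1` is `(0, θ)`, layer `0` is `(θ, 1)`). -/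
def layLo (θ : ℝ) : Fin 2 → ℝ := ![θ, 0]

/-- Upper end of the phase interval of layer `i`. -/
def layHi (θ : ℝ) : Fin 2 → ℝ := ![1, θ]

/-- Slope of the sawtooth in layer `i`. -/
def laySlope (θ : ℝ) : Fin 2 → ℝ := ![-θ, 1 - θ]

lemma saw_nonneg {θ : ℝ} (h0 : 0 < θ) (h1 : θ < 1) (y : ℝ) : 0 ≤ saw θ y :=
  le_min (mul_nonneg (by linarith) (Int.fract_nonneg _))
    (mul_nonneg h0.le (by linarith [Int.fract_lt_one y]))

lemma saw_le_one {θ : ℝ} (h0 : 0 < θ) (y : ℝ) : saw θ y ≤ 1 := by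
  refine (min_le_left _ _).trans ?_
  nlinarith [Int.fract_nonneg y, Int.fract_lt_one y]

/-- On the layer `i` of the `M`-th period the sawtooth is affine with slope `laySlope θ i` and
vanishes at the integer end of the layer, `M + 1` for `i = 0` and `M` for `i = 1`. -/
lemma saw_layer {θ : ℝ} (h0 : 0 < θ) (h1 : θ < 1) (i : Fin 2) {y : ℝ} {M : ℤ}
    (hl : M + layLo θ i < y) (hh : y < M + layHi θ i) :
    saw θ y = laySlope θ i * (y - M - (![1, 0] : Fin 2 → ℝ) i) := by
  have hM : ⌊y⌋ = M := by
    rw [Int.floor_eq_iff]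
    fin_cases i <;> simp [layLo, layHi] at hl hh <;> constructor <;> linarith
  have hf : Int.fract y = y - M := by rw [Int.fract, hM]
  unfold saw
  rw [hf]
  fin_cases i <;> simp [layLo, layHi, laySlope] at hl hh ⊢
  · rw [min_eq_right (by linarith)]; ring
  · linarith

/-- The sawtooth is 1-Lipschitz. It is nonnegative and vanishes at the integers, so when `x` and `y`
are separated by an integer both values are at most `|x - y|`. -/
lemma abs_saw_sub_le {θ : ℝ} (h0 : 0 < θ) (h1 : θ < 1) (x y : ℝ) :
    |saw θ x - saw θ y| ≤ |x - y| := by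
  wlog hxy : x ≤ y generalizing x y
  · rw [abs_sub_comm, abs_sub_comm x]
    exact this y x (le_of_not_ge hxy)
  rw [abs_sub_comm x, abs_of_nonneg (sub_nonneg.2 hxy)]
  rcases (Int.floor_mono hxy).eq_or_lt with h | h
  · have e : Int.fract y = Int.fract x + (y - x) := by unfold Int.fract; rw [h]; ring
    unfold saw
    rw [e]
    refine (abs_min_sub_min_le_max _ _ _ _).trans (max_le ?_ ?_)
    · rw [abs_le]; constructor <;> nlinarith
    · rw [abs_le]; constructor <;> nlinarith
  · have h' : ((⌊x⌋ : ℝ) + 1) ≤ ⌊y⌋ := by exact_mod_cast h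
    have hx : saw θ x ≤ y - x := by
      refine (min_le_right _ _).trans ?_
      have := Int.floor_le y
      have := Int.fract_lt_one x
      unfold Int.fract at *
      nlinarith
    have hy : saw θ y ≤ y - x := by
      refine (min_le_left _ _).trans ?_
      have := Int.lt_floor_add_one x
      have := Int.fract_nonneg y
      unfold Int.fract at *
      nlinarith
    have := saw_nonneg h0 h1 x
    have := saw_nonneg h0 h1 y
    rw [abs_le]; constructor <;> linarith

/-- Averaging over the phase `c`: each point lies in the phase interval `(lo, hi)` for a proportion
`hi - lo` of the phases, so some phase does at least as well as the average. -/
lemma exists_phase {ι : Type*} [Fintype ι] (v g lo hi : ι → ℝ) (hlo : ∀ j, 0 ≤ lo j)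
    (hlh : ∀ j, lo j ≤ hi j) (hhi : ∀ j, hi j ≤ 1) :
    ∃ c : ℝ, ∑ j, (Set.Ioo (lo j) (hi j)).indicator (fun _ => g j) (Int.fract (v j + c)) ≤
      ∑ j, (hi j - lo j) * g j := by
  have hprob : IsProbabilityMeasure (volume.restrict (Set.Ioc (0 : ℝ) 1)) := ⟨by simp⟩
  have hmeas : ∀ j, Measurable fun c : ℝ =>
      (Set.Ioo (lo j) (hi j)).indicator (fun _ => g j) (Int.fract (v j + c)) := fun j =>
    (measurable_const.indicator measurableSet_Ioo).comp
      (measurable_fract.comp (measurable_const.add measurable_id))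
  have hint : ∀ j, Integrable (fun c : ℝ =>
      (Set.Ioo (lo j) (hi j)).indicator (fun _ => g j) (Int.fract (v j + c)))
      (volume.restrict (Set.Ioc (0 : ℝ) 1)) := fun j => by
    refine Integrable.of_bound (hmeas j).aestronglyMeasurable |g j| (ae_of_all _ fun c => ?_)
    exact norm_indicator_le_norm_self (fun _ => g j) _
  have hval : ∀ j, ∫ c in Set.Ioc (0 : ℝ) 1,
      (Set.Ioo (lo j) (hi j)).indicator (fun _ => g j) (Int.fract (v j + c)) =
      (hi j - lo j) * g j := by
    intro j
    rw [← intervalIntegral.integral_of_le zero_le_one]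
    have hper : Function.Periodic (fun y : ℝ =>
        (Set.Ioo (lo j) (hi j)).indicator (fun _ => g j) (Int.fract y)) 1 := fun y => by simp
    rw [intervalIntegral.integral_comp_add_left (fun y : ℝ =>
        (Set.Ioo (lo j) (hi j)).indicator (fun _ => g j) (Int.fract y)),
      add_zero, hper.intervalIntegral_add_eq (v j) 0, zero_add,
      intervalIntegral.integral_of_le zero_le_one, integral_Ioc_eq_integral_Ioo]
    have : ∀ y ∈ Set.Ioo (0 : ℝ) 1,
        (Set.Ioo (lo j) (hi j)).indicator (fun _ => g j) (Int.fract y) =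
        (Set.Ioo (lo j) (hi j)).indicator (fun _ => g j) y := fun y hy => by
      rw [Int.fract_eq_self.2 ⟨hy.1.le, hy.2⟩]
    rw [setIntegral_congr_fun measurableSet_Ioo this, setIntegral_indicator measurableSet_Ioo,
      Set.inter_eq_right.2 (Set.Ioo_subset_Ioo (hlo j) (hhi j)), setIntegral_const]
    simp [hlh j]
  obtain ⟨c, hc⟩ := exists_le_integral (integrable_finsetSum Finset.univ fun j _ => hint j)
  refine ⟨c, ?_⟩
  rw [integral_finsetSum _ fun j _ => hint j] at hc
  simpa only [hval] using hc

/-- The rank-one `3 × 2` matrix `a bᵀ`. -/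
def rankOne (a : V3) (b : V2) : M32 := Matrix.of fun i j => a i * b j

lemma withCol_gradm_affine {w : V3 → V3} {x : V3} (ξ : M32) (a : V3) (b : V2) (q e : ℝ)
    (hw : w =ᶠ[nhds x] fun y => (q * (b 0 * y 0 + b 1 * y 1) + e) • a) :
    DifferentiableAt ℝ w x ∧ withCol ξ (gradm w x) = withCol (ξ + q • rankOne a b) 0 := by
  set Λ : V3 →L[ℝ] ℝ := q • (b 0 • ContinuousLinearMap.proj (0 : Fin 3) +
    b 1 • ContinuousLinearMap.proj (1 : Fin 3)) with hΛ
  have h1 : HasFDerivAt (fun y : V3 => (q * (b 0 * y 0 + b 1 * y 1) + e) • a)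
      (Λ.smulRight a) x := by
    have := ((Λ.hasFDerivAt (x := x)).add_const e).smul_const a
    refine this.congr_of_eventuallyEq (Eventually.of_forall fun y => ?_)
    simp [hΛ, mul_add]
  have h2 := h1.congr_of_eventuallyEq hw
  refine ⟨h2.differentiableAt, ?_⟩
  ext i j
  simp only [withCol, gradm, h2.fderiv, Matrix.of_apply]
  fin_cases j <;> simp [hΛ, rankOne] <;> ring

/-- The laminate: at scale `p`, a sawtooth in direction `b` with phase `c`, with slopes `d` times
those of `saw θ`, cut off near the lateral boundary of `(tQ')₁` by the distance to it. -/
def laminate (b : V2) (d θ p c T : ℝ) (x : V3) : ℝ :=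
  min (p * d * saw θ ((b 0 * x 0 + b 1 * x 1) / p + c)) (T / 2 - max |x 0| |x 1|)

lemma lipschitzWith_laminate (b : V2) {d θ p : ℝ} (hd : 0 < d) (h0 : 0 < θ) (h1 : θ < 1)
    (hp : 0 < p) (c T : ℝ) :
    LipschitzWith (max (Real.toNNReal (d * (|b 0| + |b 1|))) 1) (laminate b d θ p c T) := by
  refine LipschitzWith.min ?_ ?_
  · refine LipschitzWith.of_dist_le_mul fun x y => ?_
    rw [Real.coe_toNNReal _ (by positivity), Real.dist_eq, ← mul_sub, abs_mul,
      abs_of_pos (mul_pos hp hd)]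
    have hx : ∀ i, |x i - y i| ≤ dist x y := fun i => dist_le_pi_dist x y i
    calc p * d * |saw θ ((b 0 * x 0 + b 1 * x 1) / p + c) -
          saw θ ((b 0 * y 0 + b 1 * y 1) / p + c)| ≤ p * d * |((b 0 * x 0 + b 1 * x 1) / p + c) -
          ((b 0 * y 0 + b 1 * y 1) / p + c)| := 
          mul_le_mul_of_nonneg_left (abs_saw_sub_le h0 h1 _ _) (by positivity)
      _ = d * |b 0 * (x 0 - y 0) + b 1 * (x 1 - y 1)| := by
          rw [show ((b 0 * x 0 + b 1 * x 1) / p + c) - ((b 0 * y 0 + b 1 * y 1) / p + c) =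
            (b 0 * (x 0 - y 0) + b 1 * (x 1 - y 1)) / p by ring, abs_div, abs_of_pos hp]
          field_simp
      _ ≤ d * (|b 0| * dist x y + |b 1| * dist x y) := by
          gcongr
          refine (abs_add_le _ _).trans ?_
          rw [abs_mul, abs_mul]
          gcongr <;> exact hx _
      _ = _ := by ring
  · have h : ∀ i : Fin 3, LipschitzWith 1 fun x : V3 => |x i| := fun i => by
      simpa [Function.comp_def] using
        lipschitzWith_one_norm.comp (LipschitzWith.eval (α := fun _ : Fin 3 => ℝ) i)
    simpa using (LipschitzWith.const (α := V3) (T / 2)).sub ((h 0).max (h 1))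

lemma laminate_smul_mem {V : Submodule ℝ V3} {a : V3} (ha : a ∈ V) (b : V2) {d θ p : ℝ}
    (hd : 0 < d) (h0 : 0 < θ) (h1 : θ < 1) (hp : 0 < p) (c T : ℝ) :
    (fun x => laminate b d θ p c T x • a) ∈ AdmVSet T V ∧
    LipschitzWith (max (Real.toNNReal (d * (|b 0| + |b 1|))) 1 * ‖a‖₊)
      (fun x => laminate b d θ p c T x • a) := by
  have hL := lipschitzWith_laminate b hd h0 h1 hp c T
  have hL' : LipschitzWith (max (Real.toNNReal (d * (|b 0| + |b 1|))) 1 * ‖a‖₊)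
      (fun x => laminate b d θ p c T x • a) := by
    refine LipschitzWith.of_dist_le_mul fun x y => ?_
    have := hL.dist_le_mul x y
    rw [dist_eq_norm, ← sub_smul, norm_smul, ← dist_eq_norm]
    calc _ ≤ _ * ‖a‖ := mul_le_mul_of_nonneg_right this (norm_nonneg a)
      _ = _ := by push_cast; ring
  refine ⟨⟨⟨⟨_, hL'⟩, fun x hx => ?_⟩, fun x => V.smul_mem _ ha⟩, hL'⟩
  have : laminate b d θ p c T x = 0 := by
    unfold laminate
    rw [hx.1, sub_self]
    exact min_eq_right (mul_nonneg (by positivity) (saw_nonneg h0 h1 _))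
  simp [this]


/-! ### The estimate at a finite scale -/

/-- The laminate is affine near every point of an inner cell on which the phase stays inside the
layer `i`. -/
lemma laminate_eventuallyEq (b : V2) {d θ p c T L : ℝ} (hd : 0 < d) (h0 : 0 < θ) (h1 : θ < 1)
    (hp : 0 < p) (hT : T / 2 = L + p * d) (i : Fin 2) {O : Set V3} (hO : IsOpen O) {M : ℤ}
    (hin : ∀ y ∈ O, |y 0| < L ∧ |y 1| < L)
    (hM : ∀ y ∈ O, M + layLo θ i < (b 0 * y 0 + b 1 * y 1) / p + c ∧
      (b 0 * y 0 + b 1 * y 1) / p + c < M + layHi θ i)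
    (ξ : M32) (a : V3) {x : V3} (hx : x ∈ O) :
    DifferentiableAt ℝ (fun x => laminate b d θ p c T x • a) x ∧
    withCol ξ (gradm (fun x => laminate b d θ p c T x • a) x) =
      withCol (ξ + (d * laySlope θ i) • rankOne a b) 0 := by
  refine withCol_gradm_affine ξ a b _
    (p * d * laySlope θ i * (c - M - (![1, 0] : Fin 2 → ℝ) i)) ?_
  filter_upwards [hO.mem_nhds hx] with y hy
  have hs := saw_layer h0 h1 i (hM y hy).1 (hM y hy).2
  have hle : p * d * saw θ ((b 0 * y 0 + b 1 * y 1) / p + c) ≤ T / 2 - max |y 0| |y 1| := by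
    have h2 : max |y 0| |y 1| < L := max_lt (hin y hy).1 (hin y hy).2
    have h3 := mul_le_mul_of_nonneg_left (saw_le_one h0 ((b 0 * y 0 + b 1 * y 1) / p + c))
      (mul_pos hp hd).le
    linarith
  unfold laminate
  rw [min_eq_left hle, hs]
  congr 1
  field_simp
  ring

lemma layLo_nonneg {θ : ℝ} (h0 : 0 < θ) (i : Fin 2) : 0 ≤ layLo θ i := by
  fin_cases i <;> simp [layLo, h0.le]

lemma layHi_le_one {θ : ℝ} (h1 : θ < 1) (i : Fin 2) : layHi θ i ≤ 1 := by
  fin_cases i <;> simp [layHi, h1.le]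

/-- The finite-scale estimate. The square of side `2L` is tiled, for each `i`, by `(n i)²` squares
of side `2 (m i)` with integer centres; competitors `φ i` for the two phases are glued into the
squares of the `i`-th tiling lying in layers of type `i` of a laminate of scale `p`, for the best
phase of the laminate. -/
lemma cellInf_laminate_le {f : V3 → M33 → ℝ} (hf : Caratheodory f) (hf1 : H1per f) (hb : LocBdd f)
    {V : Submodule ℝ V3} {ξ : M32} {a : V3} (ha : a ∈ V) (b : V2) {d θ C R : ℝ}
    (hd : 0 < d) (h0 : 0 < θ) (h1 : θ < 1)
    (hξR : ∀ i j, |ξ i j| ≤ R)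
    (hC : ∀ᵐ x : V3, ∀ ζ : M33,
      (∀ i j, |ζ i j| ≤ R + (max (Real.toNNReal (d * (|b 0| + |b 1|))) 1 * ‖a‖₊ : NNReal)) →
        f x ζ ≤ C)
    (m n : Fin 2 → ℕ) (hm : ∀ i, 0 < m i) (L : ℕ) (hL : ∀ i, n i * m i = L)
    (t : Fin 2 → ℝ) (ht : ∀ i, 0 < t i) (htm : ∀ i, t i ≤ 2 * m i)
    (φ : Fin 2 → V3 → V3) (hφ : ∀ i, φ i ∈ AdmVSet (t i) V)
    {p : ℝ} (hp : 0 < p)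
    (hr : ∀ i, 2 * ((|b 0| + |b 1|) * m i / p) ≤ layHi θ i - layLo θ i) :
    cellInf f ξ (2 * L + 2 * (p * d)) (AdmVSet (2 * L + 2 * (p * d)) V) ≤
      C * (2 * L + 2 * (p * d)) ^ 2 + ∑ i, (n i : ℝ) ^ 2 *
        ((layHi θ i - layLo θ i - 2 * ((|b 0| + |b 1|) * m i / p)) *
          (cellE f (ξ + (d * laySlope θ i) • rankOne a b) (t i) (φ i) - C * t i ^ 2)) := by
  set T : ℝ := 2 * L + 2 * (p * d) with hTdef
  have hpd : 0 < p * d := mul_pos hp hd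
  have hT : 0 ≤ T := by positivity
  set r : Fin 2 → ℝ := fun i => (|b 0| + |b 1|) * m i / p with hrdef
  have hr0 : ∀ i, 0 ≤ r i := fun i => by simp only [hrdef]; positivity
  let ι := (i : Fin 2) × (Fin (n i) × Fin (n i))
  let k : ι → ℤ := fun j => -(L : ℤ) + m j.1 * (2 * (j.2.1 : ℕ) + 1)
  let l : ι → ℤ := fun j => -(L : ℤ) + m j.1 * (2 * (j.2.2 : ℕ) + 1)
  let z : ι → V3 := fun j => ![(k j : ℝ), (l j : ℝ), 0]
  let ξ' : Fin 2 → M32 := fun i => ξ + (d * laySlope θ i) • rankOne a b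
  let v : ι → ℝ := fun j => (b 0 * z j 0 + b 1 * z j 1) / p
  obtain ⟨c, hc⟩ := exists_phase v
    (fun j : ι => cellE f (ξ' j.1) (t j.1) (φ j.1) - C * t j.1 ^ 2)
    (fun j => layLo θ j.1 + r j.1) (fun j => layHi θ j.1 - r j.1)
    (fun j => add_nonneg (layLo_nonneg h0 _) (hr0 _)) (fun j => by linarith [hr j.1])
    (fun j => by linarith [layHi_le_one h1 j.1, hr0 j.1])
  classical
  let J : Finset ι := Finset.univ.filter fun j =>
    Int.fract (v j + c) ∈ Set.Ioo (layLo θ j.1 + r j.1) (layHi θ j.1 - r j.1)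
  obtain ⟨hwA, hwL⟩ := laminate_smul_mem ha b hd h0 h1 hp c T
  -- a cell lies in one square of its tiling, hence in the inner square of side `2L`
  have hcell : ∀ (j : ι) (x : V3), x - z j ∈ openCyl (t j.1) →
      (|x 0 - z j 0| < m j.1 ∧ |x 1 - z j 1| < m j.1) ∧ |x 2| < 1 / 2 := by
    intro j x hx
    obtain ⟨hx0, hx1, hx2⟩ := hx
    have := htm j.1
    refine ⟨⟨?_, ?_⟩, by simpa [z] using hx2⟩
    · simp only [Pi.sub_apply] at hx0; linarith
    · simp only [Pi.sub_apply] at hx1; linarith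
  have hsq : ∀ (i : Fin 2) (e : Fin (n i)) (y : ℝ),
      |y - ((-(L : ℤ) + m i * (2 * (e : ℕ) + 1) : ℤ) : ℝ)| < m i →
      (2 * m i * (e : ℝ) < y + L ∧ y + L < 2 * m i * ((e : ℝ) + 1)) ∧ |y| < L := by
    intro i e y hy
    push_cast at hy
    rw [abs_lt] at hy
    have h2 : 2 * m i * (e : ℝ) < y + L ∧ y + L < 2 * m i * ((e : ℝ) + 1) := by
      constructor <;> linarith
    refine ⟨h2, ?_⟩
    have h3 : ((e : ℕ) : ℝ) + 1 ≤ n i := by exact_mod_cast e.2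
    have h4 : (n i : ℝ) * m i = L := by exact_mod_cast hL i
    have h5 : (0 : ℝ) ≤ m i := by positivity
    have h6 : (0 : ℝ) ≤ (e : ℕ) := by positivity
    have h7 : ((e : ℕ) + 1) * (m i : ℝ) ≤ L := by rw [← h4]; gcongr
    have h8 : 0 ≤ m i * ((e : ℕ) : ℝ) := mul_nonneg h5 h6
    rw [abs_lt]
    constructor <;> nlinarith
  have hinner : ∀ (j : ι) (x : V3), x - z j ∈ openCyl (t j.1) → |x 0| < L ∧ |x 1| < L :=
    fun j x hx => ⟨(hsq _ _ _ (hcell j x hx).1.1).2, (hsq _ _ _ (hcell j x hx).1.2).2⟩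
  -- the phase varies by at most `r i` over half a cell, so it stays inside the layer
  have hphase : ∀ j ∈ J, ∀ x : V3, x - z j ∈ openCyl (t j.1) →
      (⌊v j + c⌋ : ℝ) + layLo θ j.1 < (b 0 * x 0 + b 1 * x 1) / p + c ∧
      (b 0 * x 0 + b 1 * x 1) / p + c < ⌊v j + c⌋ + layHi θ j.1 := by
    intro j hj x hx
    have hj' := (Finset.mem_filter.1 hj).2
    obtain ⟨⟨hx0, hx1⟩, -⟩ := hcell j x hx
    have h2 : |(b 0 * x 0 + b 1 * x 1) / p - v j| ≤ r j.1 := by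
      have : (b 0 * x 0 + b 1 * x 1) / p - v j =
          (b 0 * (x 0 - z j 0) + b 1 * (x 1 - z j 1)) / p := by simp only [v]; ring
      rw [this, abs_div, abs_of_pos hp]
      simp only [hrdef]
      rw [add_mul]
      gcongr
      refine (abs_add_le _ _).trans ?_
      rw [abs_mul, abs_mul]
      gcongr
    have h3 := Int.self_sub_floor (v j + c)
    rw [← h3] at hj'
    rw [abs_le] at h2
    constructor <;> linarith [hj'.1, hj'.2]
  have hglue := cellInf_le_of_glue hf hf1 hb (ξ := ξ) (C := C) hT hwA (by
      filter_upwards [hC] with x hx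
      exact hx _ (abs_withCol_le hξR ((abs_nonneg _).trans (hξR 0 0)) (abs_gradm_le hwL x)))
    J k l z (fun _ => rfl) (fun j => t j.1) (fun j => ht _) (fun j => φ j.1) (fun j => hφ _)
    (fun j => ξ' j.1)
    (fun j _ x hx => by
      have := hinner j x hx
      refine ⟨?_, ?_, (hcell j x hx).2⟩ <;> simp only [hTdef] <;> linarith)
    (by
      rintro ⟨i, e⟩ hj ⟨i', e'⟩ hj' hne x hx hx'
      refine hne ?_
      have q1 := hphase _ hj x hx
      have q2 := hphase _ hj' x hx'
      have hfl : ∀ (M : ℤ) (i : Fin 2) (y : ℝ), M + layLo θ i < y → y < M + layHi θ i →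
          ⌊y⌋ = M := by
        intro M i y hl hh
        rw [Int.floor_eq_iff]
        have := layLo_nonneg h0 i
        have := layHi_le_one h1 i
        constructor <;> linarith
      have f1 := hfl _ _ _ q1.1 q1.2
      have f2 := hfl _ _ _ q2.1 q2.2
      rw [← f1] at q1
      rw [← f2] at q2
      have hii : i = i' := by
        obtain ⟨q1, q1'⟩ := q1
        obtain ⟨q2, q2'⟩ := q2
        fin_cases i <;> fin_cases i' <;> simp [layLo, layHi] at q1 q1' q2 q2' ⊢ <;> linarith
      subst hii
      have hee : ∀ (e e' : Fin (n i)) (y : ℝ),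
          |y - ((-(L : ℤ) + m i * (2 * (e : ℕ) + 1) : ℤ) : ℝ)| < m i →
          |y - ((-(L : ℤ) + m i * (2 * (e' : ℕ) + 1) : ℤ) : ℝ)| < m i → e = e' := by
        intro e e' y h2 h3
        have h4 := (hsq i e y h2).1
        have h5 := (hsq i e' y h3).1
        have hmi : (0 : ℝ) < 2 * m i := by have := hm i; positivity
        have h6 : (e : ℝ) < (e' : ℝ) + 1 := lt_of_mul_lt_mul_left (h4.1.trans h5.2) hmi.le
        have h7 : (e' : ℝ) < (e : ℝ) + 1 := lt_of_mul_lt_mul_left (h5.1.trans h4.2) hmi.le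
        have h6' : (e : ℕ) < (e' : ℕ) + 1 := by exact_mod_cast h6
        have h7' : (e' : ℕ) < (e : ℕ) + 1 := by exact_mod_cast h7
        exact Fin.ext (by omega)
      have g1 := hee e.1 e'.1 _ (hcell _ x hx).1.1 (hcell _ x hx').1.1
      have g2 := hee e.2 e'.2 _ (hcell _ x hx).1.2 (hcell _ x hx').1.2
      rw [Prod.ext g1 g2])
    (fun j hj x hx => laminate_eventuallyEq b (L := (L : ℝ)) hd h0 h1 hp
      (by simp only [hTdef]; ring) j.1
      (O := (fun x => x - z j) ⁻¹' openCyl (t j.1))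
      ((isOpen_openCyl _).preimage (continuous_id.sub continuous_const))
      (fun y hy => hinner j y hy) (fun y hy => hphase j hj y hy) ξ a hx)
  refine hglue.trans (add_le_add_right ?_ _)
  have hJ : ∑ j ∈ J, (cellE f (ξ' j.1) (t j.1) (φ j.1) - C * t j.1 ^ 2) =
      ∑ j : ι, (Set.Ioo (layLo θ j.1 + r j.1) (layHi θ j.1 - r j.1)).indicator
        (fun _ => cellE f (ξ' j.1) (t j.1) (φ j.1) - C * t j.1 ^ 2) (Int.fract (v j + c)) := by
    simp only [J, Finset.sum_filter, Set.indicator_apply]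
  rw [hJ]
  refine hc.trans (le_of_eq ?_)
  rw [Fintype.sum_sigma]
  refine Finset.sum_congr rfl fun i _ => ?_
  simp only [Finset.sum_const, Finset.card_univ, Fintype.card_prod, Fintype.card_fin, nsmul_eq_mul]
  push_cast
  simp only [hrdef, ξ']
  ring


/-! ### Passage to the limit -/

lemma exists_entry_bound (ξ : M32) : ∃ R : ℝ, ∀ i j, |ξ i j| ≤ R :=
  ⟨∑ i, ∑ j, |ξ i j|, fun i j =>
    (Finset.single_le_sum (f := fun j => |ξ i j|) (fun _ _ => abs_nonneg _) (Finset.mem_univ j)).trans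
      (Finset.single_le_sum (f := fun i => ∑ j, |ξ i j|)
        (fun _ _ => Finset.sum_nonneg fun _ _ => abs_nonneg _) (Finset.mem_univ i))⟩

/-- The scaled cell infima are bounded, which makes the real-valued `liminf` defining `Tf0hom`
meaningful. -/
lemma exists_scaled_bound {f : V3 → M33 → ℝ} (hf : Caratheodory f) (hb : LocBdd f)
    (V : Submodule ℝ V3) (ξ : M32) :
    ∃ C : ℝ, ∀ t : ℝ, 0 < t → (t ^ 2)⁻¹ * cellInf f ξ t (AdmVSet t V) ≤ C := by
  obtain ⟨R, hR⟩ := exists_entry_bound ξ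
  obtain ⟨C, -, hC⟩ := hb.2 (R + (0 : NNReal))
  refine ⟨C, fun t ht => ?_⟩
  have h0 : LipschitzWith 0 (0 : V3 → V3) := LipschitzWith.const 0
  have h1 : cellE f ξ t 0 ≤ C * t ^ 2 := by
    calc cellE f ξ t 0 ≤ ∫ _x in openCyl t, C := by
          refine setIntegral_mono_ae (integrableOn_energy hf hb ξ ht.le h0)
            (integrableOn_const (by simp [volume_openCyl ht.le])) ?_
          filter_upwards [hC] with x hx
          exact hx _ (abs_withCol_le hR ((abs_nonneg _).trans (hR 0 0)) (abs_gradm_le h0 x))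
      _ = C * t ^ 2 := by
          rw [setIntegral_const, volume_real_openCyl ht.le, smul_eq_mul, mul_comm]
  have h2 := (cellInf_le hb ξ t (zero_mem_AdmVSet t V)).trans h1
  rw [inv_mul_le_iff₀ (by positivity), mul_comm]
  exact h2

lemma isBoundedUnder_ge_scaled {f : V3 → M33 → ℝ} (hb : LocBdd f)
    (V : Submodule ℝ V3) (ξ : M32) :
    IsBoundedUnder (· ≥ ·) atTop fun t : ℝ => (t ^ 2)⁻¹ * cellInf f ξ t (AdmVSet t V) :=
  isBoundedUnder_of ⟨0, fun t => mul_nonneg (by positivity) (cellInf_nonneg hb ξ t _)⟩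

/-- The `liminf` over real sizes is bounded along any sequence of sizes tending to infinity. -/
lemma Tf0hom_le_of_tendsto {f : V3 → M33 → ℝ} (hb : LocBdd f) (V : Submodule ℝ V3) (ξ : M32)
    {T A : ℕ → ℝ} {A' : ℝ} (hT : Tendsto T atTop atTop) (hA : Tendsto A atTop (nhds A'))
    (h : ∀ᶠ N in atTop, (T N ^ 2)⁻¹ * cellInf f ξ (T N) (AdmVSet (T N) V) ≤ A N) :
    Tf0hom f V ξ ≤ A' := by
  refine le_of_forall_pos_le_add fun ε hε => ?_
  refine liminf_le_of_frequently_le ?_ (isBoundedUnder_ge_scaled hb V ξ)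
  refine hT.frequently (Eventually.frequently ?_)
  filter_upwards [h, hA.eventually_lt_const (lt_add_of_pos_right A' hε)] with N h1 h2
  exact h1.trans h2.le

/-- The `liminf` is nearly attained at arbitrarily large sizes, by an actual competitor. -/
lemma exists_near_optimal {f : V3 → M33 → ℝ} (hf : Caratheodory f) (hb : LocBdd f)
    (V : Submodule ℝ V3) (ξ : M32) {ε : ℝ} (hε : 0 < ε) (T₀ : ℝ) :
    ∃ t : ℝ, T₀ ≤ t ∧ 0 < t ∧ ∃ φ ∈ AdmVSet t V, cellE f ξ t φ ≤ (Tf0hom f V ξ + ε) * t ^ 2 := by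
  obtain ⟨C, hC⟩ := exists_scaled_bound hf hb V ξ
  have hco : IsCoboundedUnder (· ≥ ·) atTop
      fun t : ℝ => (t ^ 2)⁻¹ * cellInf f ξ t (AdmVSet t V) := by
    refine IsBoundedUnder.isCoboundedUnder_ge ⟨C, ?_⟩
    rw [eventually_map]
    filter_upwards [eventually_gt_atTop 0] with t ht using hC t ht
  have hfr := frequently_lt_of_liminf_lt hco
    (show liminf (fun t : ℝ => (t ^ 2)⁻¹ * cellInf f ξ t (AdmVSet t V)) atTop < Tf0hom f V ξ + ε from
      lt_add_of_pos_right _ hε)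
  obtain ⟨t, ht, ht0, ht1⟩ :=
    (hfr.and_eventually ((eventually_gt_atTop 0).and (eventually_ge_atTop T₀))).exists
  rw [inv_mul_lt_iff₀ (by positivity), mul_comm] at ht
  obtain ⟨_, ⟨φ, hφ, rfl⟩, hlt⟩ := exists_lt_of_csInf_lt
    (Set.Nonempty.image _ ⟨0, zero_mem_AdmVSet t V⟩) ht
  exact ⟨t, ht1, ht0, φ, hφ, hlt.le⟩

lemma sum_layer_length (θ : ℝ) (g : Fin 2 → ℝ) :
    ∑ i, (layHi θ i - layLo θ i) * g i = (1 - θ) * g 0 + θ * g 1 := by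
  simp [layHi, layLo, Fin.sum_univ_two]

/-- Letting first the size of the square and then the scale of the laminate tend to infinity in
the finite-scale estimate. -/
lemma Tf0hom_le_of_competitors {f : V3 → M33 → ℝ} (hf : Caratheodory f) (hf1 : H1per f)
    (hb : LocBdd f) {V : Submodule ℝ V3} {ξ : M32} {a : V3} (ha : a ∈ V) (b : V2) {d θ C R : ℝ}
    (hd : 0 < d) (h0 : 0 < θ) (h1 : θ < 1)
    (hξR : ∀ i j, |ξ i j| ≤ R)
    (hC : ∀ᵐ x : V3, ∀ ζ : M33,
      (∀ i j, |ζ i j| ≤ R + (max (Real.toNNReal (d * (|b 0| + |b 1|))) 1 * ‖a‖₊ : NNReal)) →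
        f x ζ ≤ C)
    (m : Fin 2 → ℕ) (hm : ∀ i, 0 < m i)
    (t : Fin 2 → ℝ) (ht : ∀ i, 0 < t i) (htm : ∀ i, t i ≤ 2 * m i)
    (φ : Fin 2 → V3 → V3) (hφ : ∀ i, φ i ∈ AdmVSet (t i) V) :
    Tf0hom f V ξ ≤ C + ∑ i, (layHi θ i - layLo θ i) *
      ((cellE f (ξ + (d * laySlope θ i) • rankOne a b) (t i) (φ i) - C * t i ^ 2) /
        (2 * m i) ^ 2) := by
  set X : Fin 2 → ℝ := fun i =>
    cellE f (ξ + (d * laySlope θ i) • rankOne a b) (t i) (φ i) - C * t i ^ 2 with hX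
  set ρ : ℝ → Fin 2 → ℝ := fun p i => (|b 0| + |b 1|) * m i / p with hρ
  have hρlim : ∀ i, Tendsto (fun p => ρ p i) atTop (nhds 0) := fun i =>
    tendsto_const_nhds.div_atTop tendsto_id
  have hlen : ∀ i, 0 < layHi θ i - layLo θ i := fun i => by
    fin_cases i <;> simp [layHi, layLo, h0, h1]
  -- the limit over squares of growing size, at a fixed scale `p`
  have step : ∀ p : ℝ, 0 < p → (∀ i, 2 * ρ p i ≤ layHi θ i - layLo θ i) →
      Tf0hom f V ξ ≤ C + ∑ i, (layHi θ i - layLo θ i - 2 * ρ p i) * (X i / (2 * m i) ^ 2) := by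
    intro p hp hr
    have hpd : 0 < p * d := mul_pos hp hd
    have hm0 : (0 : ℝ) < m 0 := by exact_mod_cast hm 0
    have hm1 : (0 : ℝ) < m 1 := by exact_mod_cast hm 1
    set L : ℕ → ℕ := fun N => N * (m 0 * m 1) with hLdef
    set T : ℕ → ℝ := fun N => 2 * L N + 2 * (p * d) with hTdef
    have hLT : Tendsto (fun N => (2 * L N : ℝ)) atTop atTop := by
      have : Tendsto (fun N : ℕ => (N : ℝ) * (2 * (m 0 * m 1))) atTop atTop :=
        tendsto_natCast_atTop_atTop.atTop_mul_const (by positivity)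
      refine this.congr fun N => ?_
      simp only [hLdef]; push_cast; ring
    have hT : Tendsto T atTop atTop := tendsto_atTop_add_const_right _ _ hLT
    have hratio : Tendsto (fun N => 2 * L N / T N) atTop (nhds 1) := by
      have h2 : Tendsto (fun N => 1 - 2 * (p * d) / T N) atTop (nhds (1 - 0)) :=
        tendsto_const_nhds.sub (tendsto_const_nhds.div_atTop hT)
      rw [sub_zero] at h2
      refine h2.congr fun N => ?_
      have hTN : T N ≠ 0 := by simp only [hTdef]; positivity
      field_simp
      simp only [hTdef]; ring
    have hA : Tendsto (fun N => C + (2 * L N / T N) ^ 2 *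
        ∑ i, (layHi θ i - layLo θ i - 2 * ρ p i) * (X i / (2 * m i) ^ 2)) atTop
        (nhds (C + 1 ^ 2 *
          ∑ i, (layHi θ i - layLo θ i - 2 * ρ p i) * (X i / (2 * m i) ^ 2))) :=
      tendsto_const_nhds.add ((hratio.pow 2).mul tendsto_const_nhds)
    rw [one_pow, one_mul] at hA
    refine Tf0hom_le_of_tendsto hb V ξ hT hA (Eventually.of_forall fun N => ?_)
    have hTN : 0 < T N := by simp only [hTdef]; positivity
    have hfin := cellInf_laminate_le hf hf1 hb ha b hd h0 h1 hξR hC m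
      (![N * m 1, N * m 0] : Fin 2 → ℕ) hm (L N)
      (fun i => by fin_cases i <;> simp [hLdef] <;> ring) t ht htm φ hφ hp hr
    rw [inv_mul_le_iff₀ (by positivity)]
    refine hfin.trans (le_of_eq ?_)
    have e : ∀ S : ℝ, T N ^ 2 * (C + (2 * L N / T N) ^ 2 * S) =
        C * T N ^ 2 + (2 * L N) ^ 2 * S := fun S => by field_simp
    rw [e]
    congr 1
    rw [Finset.mul_sum, Fin.sum_univ_two, Fin.sum_univ_two]
    simp only [hLdef, hX, hρ, Matrix.cons_val_zero, Matrix.cons_val_one]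
    push_cast
    field_simp
  -- the limit over the scale
  have hlim : Tendsto (fun p => C + ∑ i, (layHi θ i - layLo θ i - 2 * ρ p i) *
      (X i / (2 * m i) ^ 2)) atTop
      (nhds (C + ∑ i, (layHi θ i - layLo θ i - 2 * 0) * (X i / (2 * m i) ^ 2))) :=
    tendsto_const_nhds.add (tendsto_finsetSum _ fun i _ =>
      (tendsto_const_nhds.sub ((hρlim i).const_mul 2)).mul_const _)
  simp only [mul_zero, sub_zero] at hlim
  refine ge_of_tendsto hlim ?_
  have hev : ∀ᶠ p in atTop, ∀ i, 2 * ρ p i ≤ layHi θ i - layLo θ i := by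
    rw [eventually_all]
    intro i
    have := (hρlim i).const_mul 2
    rw [mul_zero] at this
    exact (this.eventually_lt_const (hlen i)).mono fun _ h => h.le
  filter_upwards [hev, eventually_gt_atTop 0] with p hp1 hp0 using step p hp0 hp1

/-- Convexity inequality along a tangential rank-one direction. -/
lemma Tf0hom_laminate_le {f : V3 → M33 → ℝ} (hf : Caratheodory f) (hf1 : H1per f) (hb : LocBdd f)
    {V : Submodule ℝ V3} (ξ : M32) {a : V3} (ha : a ∈ V) (b : V2) {d θ : ℝ}
    (hd : 0 < d) (h0 : 0 < θ) (h1 : θ < 1) :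
    Tf0hom f V ξ ≤ (1 - θ) * Tf0hom f V (ξ + (d * -θ) • rankOne a b) +
      θ * Tf0hom f V (ξ + (d * (1 - θ)) • rankOne a b) := by
  obtain ⟨R, hR⟩ := exists_entry_bound ξ
  obtain ⟨C, hC0, hC⟩ :=
    hb.2 (R + (max (Real.toNNReal (d * (|b 0| + |b 1|))) 1 * ‖a‖₊ : NNReal))
  refine le_of_forall_pos_le_add fun ε hε => ?_
  choose t ht1 ht0 φ hφ hE using fun i : Fin 2 =>
    exists_near_optimal hf hb V (ξ + (d * laySlope θ i) • rankOne a b) (half_pos hε) (8 * C / ε)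
  have hm : ∀ i, 0 < ⌈t i / 2⌉₊ := fun i => Nat.ceil_pos.2 (half_pos (ht0 i))
  have htm : ∀ i, t i ≤ 2 * ⌈t i / 2⌉₊ := fun i => by linarith [Nat.le_ceil (t i / 2)]
  have htm' : ∀ i, 2 * (⌈t i / 2⌉₊ : ℝ) ≤ t i + 2 := fun i => by
    linarith [Nat.ceil_lt_add_one (half_pos (ht0 i)).le]
  have hmain := Tf0hom_le_of_competitors hf hf1 hb ha b hd h0 h1 hR hC (fun i => ⌈t i / 2⌉₊) hm
    t ht0 htm φ hφ
  -- rounding the cell up to an even integer side costs at most `ε / 2` since `t i ≥ 8 C / ε`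
  have hX : ∀ i, (cellE f (ξ + (d * laySlope θ i) • rankOne a b) (t i) (φ i) - C * t i ^ 2) /
      (2 * (⌈t i / 2⌉₊ : ℝ)) ^ 2 ≤
      Tf0hom f V (ξ + (d * laySlope θ i) • rankOne a b) + ε - C := by
    intro i
    set s : ℝ := 2 * (⌈t i / 2⌉₊ : ℝ) with hs
    have hts : t i ≤ s := htm i
    have hst : s ≤ t i + 2 := htm' i
    have htpos := ht0 i
    set G := Tf0hom f V (ξ + (d * laySlope θ i) • rankOne a b) + ε / 2 with hG
    have hG0 : 0 ≤ G := by
      have := (cellE_nonneg hb (ξ + (d * laySlope θ i) • rankOne a b) (t i) (φ i)).trans (hE i)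
      exact nonneg_of_mul_nonneg_left this (by positivity)
    have hCt : 8 * C ≤ t i * ε := by
      have := ht1 i
      rwa [div_le_iff₀ hε] at this
    have hspos : 0 < s := htpos.trans_le hts
    rw [div_le_iff₀ (by positivity)]
    have e1 : cellE f (ξ + (d * laySlope θ i) • rankOne a b) (t i) (φ i) ≤ G * s ^ 2 :=
      (hE i).trans (by gcongr)
    have e2 : C * (s ^ 2 - t i ^ 2) ≤ ε / 2 * s ^ 2 := by
      have e3 : s ^ 2 - t i ^ 2 ≤ 4 * s := by nlinarith
      have e4 : C * 4 ≤ ε / 2 * s := by nlinarith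
      calc C * (s ^ 2 - t i ^ 2) ≤ C * (4 * s) := by gcongr
        _ = C * 4 * s := by ring
        _ ≤ ε / 2 * s * s := by gcongr
        _ = _ := by ring
    have e5 : Tf0hom f V (ξ + (d * laySlope θ i) • rankOne a b) + ε - C = G + ε / 2 - C := by
      simp only [hG]; ring
    rw [e5]
    linarith
  rw [sum_layer_length] at hmain
  have hx0 := mul_le_mul_of_nonneg_left (hX 0) (by linarith : 0 ≤ 1 - θ)
  have hx1 := mul_le_mul_of_nonneg_left (hX 1) h0.le
  simp only [laySlope, Matrix.cons_val_zero, Matrix.cons_val_one] at hmain hx0 hx1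
  linarith

/-- `Tf⁰hom(V, ·)` is rank-one convex along tangential rank-one directions. -/
theorem stmt_5
    (Φ : ℝ → ℝ) (hΦ : IsYoung Φ) (hΔ : Delta2 Φ) (hΝ : Nabla2 Φ)
    (f : V3 → M33 → ℝ) (hf : Caratheodory f) (hf1 : H1per f)
    (α β : ℝ) (hα : 0 < α) (hαβ : α ≤ β) (hf2 : H2growth Φ α β f)
    (V : Submodule ℝ V3) (ξα : M32) (hξα : colsIn V ξα)
    (a : V3) (ha : a ∈ V) (b : V2) :
    ConvexOn ℝ Set.univ
      (fun lam : ℝ => Tf0hom f V (ξα + lam • (Matrix.of fun i j => a i * b j))) := by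
  have hb : LocBdd f := locBdd_of_growth hΦ hα hαβ hf2
  refine LinearOrder.convexOn_of_lt convex_univ fun x _ y _ hxy A B hA hB hAB => ?_
  -- mean `A x + B y` and phases at `x` and `y`: amplitude `y - x`, volume fraction `B` of the phase `y`
  have key := Tf0hom_laminate_le hf hf1 hb (ξα + (A * x + B * y) • rankOne a b) ha b
    (sub_pos.2 hxy) hB (by linarith : B < 1)
  obtain rfl : A = 1 - B := by linarith
  rw [add_assoc, add_assoc, ← add_smul, ← add_smul,
    show (1 - B) * x + B * y + (y - x) * -B = x by ring,
    show (1 - B) * x + B * y + (y - x) * (1 - B) = y by ring] at key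
  exact key
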